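/- Let N be a natural number and p a real with 0 < p < 1. Then for all natural numbers n, x with 1 ≤ n ≤ N−1 and 1 ≤ x ≤ N, the Krawtchouk polynomials satisfy the shifted recurrence relation x · k_n(x;p,N) = (p²(N−n)/(1−p)) · k_{n+1}(x−1;p,N) − n(1−p) · k_{n−1}(x−1;p,N) + p(N−2n) · k_n(x−1;p,N), where N−n and N−2n denote real numbers (for n = 0 the relation also holds with the term n(1−p)·k_{n−1} equal to zero). -/

import Mathlib

/-!
Put `y = x - 1` and `g m = (-1)^m m! (N-m)!/N! p^{-m}`, so that up to the weight
`(p/(1-p))^y C(N,y)` the polynomial `k_n(y)` is `∑ m, C(n,m) C(y,m) g m`. Since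
`x C(N,x) = (N-y) C(N,y)`, removing the common weight and multiplying by `1-p` turns the claim
into the vanishing of a single sum over `m ≤ n+1`. That sum telescopes: by the two-term recurrence
`p (N-m) g (m+1) = -(m+1) g m`, its partial sum up to `M` is
`g M C(n,M) C(y,M) ((n-M) - p (y-M))` (`kraw_partial_sum`), which is zero at `M = n+1`
because of the factor `C(n,M)`.
-/

/-- The (renormalized) Krawtchouk polynomial `k_n(x; p, N)`.
For `x ≥ 0` it equals `(p/(1-p))^x * C(N,x) * ₂F₁(-n,-x;-N;1/p)` written as a finite sum,
and it is `0` for `x < 0`. -/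
noncomputable def kraw (p : ℝ) (N n : ℕ) (x : ℤ) : ℝ :=
  if x < 0 then 0
  else (p / (1 - p)) ^ x * (N.choose x.toNat : ℝ) *
    ∑ m ∈ Finset.range (min n x.toNat + 1),
      (-1 : ℝ) ^ m * (n.choose m : ℝ) * (x.toNat.choose m : ℝ) * (m.factorial : ℝ) *
        ((N - m).factorial / (N.factorial : ℝ)) * p ^ (-(m : ℤ))

/-- The factor of the `m`-th term of the Krawtchouk sum that depends on neither the degree nor
the argument. -/
noncomputable def krawCoeff (p : ℝ) (N m : ℕ) : ℝ :=
  (-1 : ℝ) ^ m * (m.factorial : ℝ) * ((N - m).factorial / (N.factorial : ℝ)) * p ^ (-(m : ℤ))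

lemma krawCoeff_succ (p : ℝ) (hp : p ≠ 0) (N m : ℕ) (hm : m < N) :
    p * ((N : ℝ) - m) * krawCoeff p N (m + 1) = -((m : ℝ) + 1) * krawCoeff p N m := by
  obtain ⟨d, rfl⟩ : ∃ d, N = m + 1 + d := ⟨N - (m + 1), by omega⟩
  have h1 : m + 1 + d - (m + 1) = d := by omega
  have h2 : m + 1 + d - m = d + 1 := by omega
  have h3 : p ^ (-((m + 1 : ℕ) : ℤ)) * p = p ^ (-(m : ℤ)) := by
    rw [← zpow_add_one₀ hp]
    congr 1
    push_cast
    ring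
  unfold krawCoeff
  rw [h1, h2, ← h3, Nat.factorial_succ m, Nat.factorial_succ d, pow_succ]
  push_cast
  ring

/-- The upper limit of the Krawtchouk sum may be any `K > n`: the additional terms contain a
vanishing binomial coefficient. -/
lemma kraw_natCast (p : ℝ) (N n x K : ℕ) (hK : n < K) :
    kraw p N n (x : ℤ) = (p / (1 - p)) ^ x * (N.choose x : ℝ) *
      ∑ m ∈ Finset.range K, krawCoeff p N m * ((n.choose m : ℝ) * (x.choose m : ℝ)) := by
  have h0 : ¬ ((x : ℤ) < 0) := by omega
  simp only [kraw, if_neg h0, Int.toNat_natCast, zpow_natCast]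
  congr 1
  trans ∑ m ∈ Finset.range (min n x + 1),
      krawCoeff p N m * ((n.choose m : ℝ) * (x.choose m : ℝ))
  · refine Finset.sum_congr rfl fun m _ => ?_
    unfold krawCoeff
    ring
  refine Finset.sum_subset ?_ fun m _ hm => ?_
  · intro m hm
    simp only [Finset.mem_range] at hm ⊢
    omega
  · simp only [Finset.mem_range, not_lt] at hm
    rcases (by omega : n < m ∨ x < m) with h | h <;> simp [Nat.choose_eq_zero_of_lt h]

lemma cast_succ_mul_choose_succ (n m : ℕ) :
    ((m : ℝ) + 1) * (n.choose (m + 1) : ℝ) = ((n : ℝ) - m) * (n.choose m : ℝ) := by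
  rcases le_or_gt m n with h | h
  · have := Nat.choose_succ_right_eq n m
    have h2 : (n.choose (m + 1) : ℝ) * ((m : ℝ) + 1) = n.choose m * ((n : ℝ) - m) := by
      rw [← Nat.cast_sub h]
      exact_mod_cast this
    linear_combination h2
  · simp [Nat.choose_eq_zero_of_lt h, Nat.choose_eq_zero_of_lt (Nat.lt_succ_of_lt h)]

lemma cast_mul_choose_pred (n m : ℕ) :
    ((n : ℝ) + 1) * (n.choose m : ℝ) = ((n : ℝ) + 1 - m) * ((n + 1).choose m : ℝ) := by
  have h1 : ((n : ℝ) + 1) * (n.choose m : ℝ) = ((n + 1).choose (m + 1) : ℝ) * ((m : ℝ) + 1) := by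
    exact_mod_cast Nat.add_one_mul_choose_eq n m
  have h2 := cast_succ_mul_choose_succ (n + 1) m
  push_cast at h2
  linear_combination h1 + h2

/-- Closed form of the partial sums of the recurrence, for degree `n + 1`, argument `y` and with
the weight removed. -/
lemma kraw_partial_sum (p : ℝ) (hp : p ≠ 0) (N n y : ℕ) (M : ℕ) (hM : M ≤ N) :
    ∑ m ∈ Finset.range (M + 1), krawCoeff p N m *
      (p * ((N : ℝ) - y) * (((n + 1).choose m : ℝ) * ((y + 1).choose m : ℝ))
        - p ^ 2 * ((N : ℝ) - (n + 1)) * (((n + 2).choose m : ℝ) * (y.choose m : ℝ))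
        + ((n : ℝ) + 1) * (1 - p) ^ 2 * ((n.choose m : ℝ) * (y.choose m : ℝ))
        - p * (1 - p) * ((N : ℝ) - 2 * (n + 1)) * (((n + 1).choose m : ℝ) * (y.choose m : ℝ)))
    = krawCoeff p N M * ((n + 1).choose M : ℝ) * (y.choose M : ℝ) *
        (((n : ℝ) + 1 - M) - p * ((y : ℝ) - M)) := by
  induction M with
  | zero =>
    simp only [zero_add, Finset.sum_range_one, Nat.choose_zero_right, Nat.cast_one, Nat.cast_zero]
    ring
  | succ M ih =>
    rw [Finset.sum_range_succ, ih (by omega)]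
    have hg := krawCoeff_succ p hp N M (by omega)
    have ha := cast_succ_mul_choose_succ (n + 1) M
    have hb := cast_succ_mul_choose_succ y M
    have hc := cast_mul_choose_pred n (M + 1)
    have e1 : ((n + 2).choose (M + 1) : ℝ) = (n + 1).choose M + (n + 1).choose (M + 1) := by
      exact_mod_cast Nat.choose_succ_succ (n + 1) M
    have e2 : ((y + 1).choose (M + 1) : ℝ) = y.choose M + y.choose (M + 1) := by
      exact_mod_cast Nat.choose_succ_succ y M
    rw [e1, e2]
    push_cast at ha hc ⊢
    generalize krawCoeff p N (M + 1) = g' at *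
    generalize krawCoeff p N M = g at *
    generalize ((n + 1).choose (M + 1) : ℝ) = a' at *
    generalize ((n + 1).choose M : ℝ) = a at *
    generalize (y.choose (M + 1) : ℝ) = b' at *
    generalize (y.choose M : ℝ) = b at *
    generalize (n.choose (M + 1) : ℝ) = c at *
    linear_combination (-g * b - p ^ 2 * g' * b') * ha + (p * g * a + p * g' * a') * hb
      + g' * (1 - p) ^ 2 * b' * hc + (a' * b - p * a * b') * hg

/-- Shifted recurrence relation (I) for the Krawtchouk polynomials. -/
theorem kraw_shifted_recurrence_I (N : ℕ) (p : ℝ)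
    (hp : 0 < p) (hp' : p < 1) (n x : ℕ) (hn1 : 1 ≤ n) (hn : n ≤ N - 1)
    (hx1 : 1 ≤ x) (hx : x ≤ N) :
    (x : ℝ) * kraw p N n (x : ℤ) =
      (p ^ 2 * ((N : ℝ) - n) / (1 - p)) * kraw p N (n + 1) ((x : ℤ) - 1)
        - (n : ℝ) * (1 - p) * kraw p N (n - 1) ((x : ℤ) - 1)
        + p * ((N : ℝ) - 2 * n) * kraw p N n ((x : ℤ) - 1) := by
  obtain ⟨n, rfl⟩ : ∃ k, n = k + 1 := ⟨n - 1, by omega⟩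
  obtain ⟨y, rfl⟩ : ∃ k, x = k + 1 := ⟨x - 1, by omega⟩
  have hq : (1 - p) ≠ 0 := by linarith
  have hy : ((y + 1 : ℕ) : ℤ) - 1 = (y : ℤ) := by push_cast; ring
  rw [hy, Nat.add_sub_cancel, kraw_natCast p N (n + 1) (y + 1) (n + 3) (by omega),
    kraw_natCast p N (n + 1 + 1) y (n + 3) (by omega), kraw_natCast p N n y (n + 3) (by omega),
    kraw_natCast p N (n + 1) y (n + 3) (by omega)]
  have key := kraw_partial_sum p hp.ne' N n y (n + 2) (by omega)
  rw [Nat.choose_eq_zero_of_lt (show n + 1 < n + 2 by omega), Nat.cast_zero, mul_zero, zero_mul,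
    zero_mul] at key
  have hN := cast_succ_mul_choose_succ N y
  set g := krawCoeff p N
  have key' : p * ((N : ℝ) - y) *
        ∑ m ∈ Finset.range (n + 3), g m * (((n + 1).choose m : ℝ) * ((y + 1).choose m : ℝ))
      - p ^ 2 * ((N : ℝ) - (n + 1)) *
        ∑ m ∈ Finset.range (n + 3), g m * (((n + 2).choose m : ℝ) * (y.choose m : ℝ))
      + ((n : ℝ) + 1) * (1 - p) ^ 2 *
        ∑ m ∈ Finset.range (n + 3), g m * ((n.choose m : ℝ) * (y.choose m : ℝ))
      - p * (1 - p) * ((N : ℝ) - 2 * (n + 1)) *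
        ∑ m ∈ Finset.range (n + 3), g m * (((n + 1).choose m : ℝ) * (y.choose m : ℝ)) = 0 := by
    rw [← key]
    simp only [Finset.mul_sum, ← Finset.sum_sub_distrib, ← Finset.sum_add_distrib]
    exact Finset.sum_congr rfl fun m _ => by ring
  generalize ∑ m ∈ Finset.range (n + 3),
    g m * (((n + 1).choose m : ℝ) * ((y + 1).choose m : ℝ)) = S at *
  generalize ∑ m ∈ Finset.range (n + 3),
    g m * (((n + 2).choose m : ℝ) * (y.choose m : ℝ)) = T at *
  generalize ∑ m ∈ Finset.range (n + 3), g m * ((n.choose m : ℝ) * (y.choose m : ℝ)) = U at *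
  generalize ∑ m ∈ Finset.range (n + 3),
    g m * (((n + 1).choose m : ℝ) * (y.choose m : ℝ)) = V at *
  rw [pow_succ]
  generalize (p / (1 - p)) ^ y = w
  push_cast
  field_simp
  linear_combination w * p * S * hN + w * (N.choose y : ℝ) * key'
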